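/- arXiv:2309.04327 — 6 statements merged into one kernel-verified Lean document; each statement's English description precedes it below -/
import Mathlib

section
/- Let S be a finite set of points in a metric space, let k ≥ 1, and let C ⊆ S with |C| ≤ k be a set that center-covers S with radius r (a k-center solution of radius r). If M is a set of points containing, for each c ∈ C, at least one point m with d(m,c) ≤ r (one point from each cluster), then there exists a subset M' ⊆ M with |M'| ≤ k that center-covers S with radius 2r. -/
/-- `C` center-covers `S` with radius `r`: every point of `S` is within
distance at most `r` of some point of `C`. -/
def CenterCovers {X : Type*} [MetricSpace X] (C S : Finset X) (r : ℝ) : Prop :=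
  ∀ p ∈ S, ∃ c ∈ C, dist p c ≤ r

open SetRel

theorem isCover_comp {X : Type*} {U V : SetRel X X} {S C M : Set X}
    (hSC : IsCover U S C) (hCM : IsCover V C M) : IsCover (U ○ V) S M := by
  intro p hp
  obtain ⟨c, hc, hpc⟩ := hSC hp
  obtain ⟨m, hm, hcm⟩ := hCM hc
  exact ⟨m, hm, c, hpc, hcm⟩

theorem exists_finset_subset_card_le_isCover {X : Type*} {U : SetRel X X} {C : Finset X}
    {M : Set X} (hCM : IsCover U C M) :
    ∃ M' : Finset X, ↑M' ⊆ M ∧ M'.card ≤ C.card ∧ IsCover U C M' := by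
  classical
  have exists_close : ∀ c ∈ C, ∃ m ∈ M, c ~[U] m := fun _ hc ↦ hCM hc
  choose! f hfM hfU using exists_close
  refine ⟨C.image f, ?_, Finset.card_image_le, fun c hc ↦ ⟨f c, ?_, hfU c hc⟩⟩
  · rw [Finset.coe_image]
    exact Set.image_subset_iff.2 hfM
  · exact Finset.mem_image_of_mem f hc

theorem dist_le_comp_dist_le_subset {X : Type*} [PseudoMetricSpace X] (r s : ℝ) :
    ({p | dist p.1 p.2 ≤ r} : SetRel X X) ○ {p | dist p.1 p.2 ≤ s} ⊆
      {p | dist p.1 p.2 ≤ r + s} := by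
  rintro ⟨x, z⟩ ⟨y, hxy, hyz⟩
  exact (dist_triangle x y z).trans (add_le_add hxy hyz)

-- `Metric.IsCover` takes its radius in `ℝ≥0`; `SetRel.IsCover` allows real radii of any sign.
theorem one_point_per_cluster_gives_2r_general
    {X : Type*} [PseudoMetricSpace X] {S M : Set X} {C : Finset X} {k : ℕ} {r s : ℝ}
    (hCcard : C.card ≤ k) (hcov : IsCover {p | dist p.1 p.2 ≤ r} S C)
    (hM : ∀ c ∈ C, ∃ m ∈ M, dist m c ≤ s) :
    ∃ M' : Finset X, ↑M' ⊆ M ∧ M'.card ≤ k ∧ IsCover {p | dist p.1 p.2 ≤ r + s} S M' := by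
  have hCM : IsCover {p | dist p.1 p.2 ≤ s} C M := by
    intro c hc
    obtain ⟨m, hm, hmc⟩ := hM c hc
    exact ⟨m, hm, (dist_comm c m).trans_le hmc⟩
  obtain ⟨M', hM'M, hM'card, hCM'⟩ := exists_finset_subset_card_le_isCover hCM
  exact ⟨M', hM'M, hM'card.trans hCcard,
    (isCover_comp hcov hCM').mono_entourage (dist_le_comp_dist_le_subset r s)⟩

/-- If `C ⊆ S`, `|C| ≤ k`, center-covers `S` with radius `r`, and `M` contains
one point within distance `r` of each center of `C`, then some `M' ⊆ M` with
`|M'| ≤ k` center-covers `S` with radius `2r`. -/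
theorem one_point_per_cluster_gives_2r
    {X : Type*} [MetricSpace X] (S C M : Finset X) (k : ℕ) (r : ℝ)
    (hk : 1 ≤ k) (hCS : C ⊆ S) (hCcard : C.card ≤ k)
    (hcov : CenterCovers C S r)
    (hM : ∀ c ∈ C, ∃ m ∈ M, dist m c ≤ r) :
    ∃ M' ⊆ M, M'.card ≤ k ∧ CenterCovers M' S (2 * r) := by
  rw [two_mul]
  -- `CenterCovers C S r` unfolds to `IsCover {p | dist p.1 p.2 ≤ r} S C`, arguments swapped.
  exact one_point_per_cluster_gives_2r_general hCcard hcov hM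
end

section
/- Let S be a finite set of points in a metric space, k ≥ 1, and suppose some set C ⊆ S with |C| ≤ k center-covers S with radius r. Then every subset C' ⊆ S that is maximal with respect to the property that all pairwise distances between distinct points of C' exceed 2r satisfies |C'| ≤ k, and C' center-covers S with radius 2r. In particular, C' is a 2-approximate k-center solution for S. -/
section Separation

variable {X : Type*} [PseudoMetricSpace X] {S C C' : Set X} {r : ℝ}

theorem encard_le_encard_of_pairwise_two_mul_lt_dist
    (hcov : ∀ p ∈ S, ∃ c ∈ C, dist p c ≤ r) (hsep : S.Pairwise (2 * r < dist · ·)) :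
    S.encard ≤ C.encard := by
  choose! center center_mem dist_center_le using hcov
  refine Set.encard_le_encard_of_injOn center_mem fun p hp q hq heq ↦ ?_
  have dist_le : dist p q ≤ 2 * r := calc
    dist p q ≤ dist p (center p) + dist q (center p) := dist_triangle_right _ _ _
    _ = dist p (center p) + dist q (center q) := by rw [heq]
    _ ≤ r + r := add_le_add (dist_center_le p hp) (dist_center_le q hq)
    _ = 2 * r := (two_mul r).symm
  exact hsep.eq hp hq dist_le.not_gt

theorem exists_mem_dist_le_of_forall_notMem (hr : 0 ≤ r)
    (hmax : ∀ x ∈ S, x ∉ C → ∃ c ∈ C, dist x c ≤ r) :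
    ∀ x ∈ S, ∃ c ∈ C, dist x c ≤ r := by
  intro x hx
  by_cases hxC : x ∈ C
  · exact ⟨x, hxC, (dist_self x).trans_le hr⟩
  · exact hmax x hx hxC

theorem maximal_independent_is_2approx_general
    (hcov : ∀ p ∈ S, ∃ c ∈ C, dist p c ≤ r) (hC'S : C' ⊆ S)
    (hind : C'.Pairwise (2 * r < dist · ·))
    (hmax : ∀ x ∈ S, x ∉ C' → ∃ c ∈ C', dist x c ≤ 2 * r) :
    C'.encard ≤ C.encard ∧ ∀ p ∈ S, ∃ c ∈ C', dist p c ≤ 2 * r := by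
  refine ⟨encard_le_encard_of_pairwise_two_mul_lt_dist (fun p hp ↦ hcov p (hC'S hp)) hind,
    fun p hp ↦ ?_⟩
  obtain ⟨c, -, hpc⟩ := hcov p hp
  have hr : 0 ≤ r := dist_nonneg.trans hpc
  exact exists_mem_dist_le_of_forall_notMem (by positivity) hmax p hp

end Separation

/-- If some `C ⊆ S` with `|C| ≤ k` center-covers `S` with radius `r`, then every
`C' ⊆ S` maximal with respect to all pairwise distances between distinct points
exceeding `2r` satisfies `|C'| ≤ k` and center-covers `S` with radius `2r`,
i.e. it is a 2-approximate k-center solution. -/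
theorem maximal_independent_is_2approx
    {X : Type*} [MetricSpace X] (S C C' : Finset X) (k : ℕ) (r : ℝ)
    (hk : 1 ≤ k) (hCS : C ⊆ S) (hCcard : C.card ≤ k)
    (hcov : CenterCovers C S r)
    (hC'S : C' ⊆ S)
    (hind : ∀ p ∈ C', ∀ q ∈ C', p ≠ q → 2 * r < dist p q)
    (hmax : ∀ x ∈ S, x ∉ C' → ∃ c ∈ C', dist x c ≤ 2 * r) :
    C'.card ≤ k ∧ CenterCovers C' S (2 * r) := by
  have ⟨hcard, hcover⟩ := maximal_independent_is_2approx_general (S := (S : Set X))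
    (C := (C : Set X)) (C' := (C' : Set X)) hcov hC'S hind hmax
  exact ⟨le_trans (by simpa using hcard) hCcard, hcover⟩
end

section
/- Let S be a finite nonempty set of points in a metric space, k ≥ 1, and let T ⊆ S be nonempty. Then the optimal k-center radius of T satisfies r*(T,k) ≤ 2·r*(S,k). -/
/-- `r` is the optimal k-center radius of `S`: it is achieved by some nonempty
set of at most `k` centers from `S`, and is at most any achievable radius. -/
def IsOptRadius {X : Type*} [MetricSpace X] (S : Finset X) (k : ℕ) (r : ℝ) : Prop :=
  (∃ C ⊆ S, C.Nonempty ∧ C.card ≤ k ∧ CenterCovers C S r) ∧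
  (∀ C ⊆ S, C.Nonempty → C.card ≤ k → ∀ r' : ℝ, CenterCovers C S r' → r ≤ r')

section

variable {X : Type*} [MetricSpace X] {C S T : Finset X} {k : ℕ} {r rT : ℝ}

namespace CenterCovers

lemma anti (hTS : T ⊆ S) (hC : CenterCovers C S r) : CenterCovers C T r :=
  fun p hp ↦ hC p (hTS hp)

lemma nonempty_centers (hC : CenterCovers C S r) (hS : S.Nonempty) : C.Nonempty :=
  let ⟨p, hp⟩ := hS
  let ⟨c, hc, _⟩ := hC p hp
  ⟨c, hc⟩

lemma exists_subset_centerCovers_two_mul (hC : CenterCovers C S r) :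
    ∃ D ⊆ S, D.card ≤ C.card ∧ CenterCovers D S (2 * r) := by
  classical
  choose! center center_mem dist_center_le using hC
  -- `D` has exactly one point from each cluster of points assigned to the same center.
  obtain ⟨D, hDS, center_injOn, hD⟩ :=
    Finset.exists_subset_injOn_image_eq_of_surjOn (f := center) S (S.image center)
      (by simpa only [Finset.coe_image] using Set.surjOn_image center S)
  refine ⟨D, Finset.coe_subset.1 hDS, ?_, fun p hp ↦ ?_⟩
  · exact Finset.card_le_card_of_injOn center (fun q hq ↦ center_mem q (hDS hq)) center_injOn
  · obtain ⟨q, hqD, hqp⟩ : ∃ q ∈ D, center q = center p :=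
      Finset.mem_image.1 (hD ▸ Finset.mem_image_of_mem center hp)
    refine ⟨q, hqD, ?_⟩
    calc
      dist p q ≤ dist p (center p) + dist q (center p) := dist_triangle_right ..
      _ ≤ r + r := add_le_add (dist_center_le p hp) (hqp ▸ dist_center_le q (hDS hqD))
      _ = 2 * r := (two_mul r).symm

end CenterCovers

lemma IsOptRadius.nonempty (hS : IsOptRadius S k r) : S.Nonempty :=
  let ⟨⟨_, hCS, hC, _⟩, _⟩ := hS
  hC.mono hCS

theorem opt_radius_subset_le_two_mul_general (hT : IsOptRadius T k rT) (hCk : C.card ≤ k)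
    (hC : CenterCovers C T r) : rT ≤ 2 * r := by
  obtain ⟨D, hDT, hDC, hD⟩ := hC.exists_subset_centerCovers_two_mul
  exact hT.2 D hDT (hD.nonempty_centers hT.nonempty) (hDC.trans hCk) (2 * r) hD

end

/-- For a nonempty subset `T ⊆ S`, the optimal k-center radius of `T` (with
centers required to lie in `T`) is at most twice that of `S`. -/
theorem opt_radius_subset_le_two_mul
    {X : Type*} [MetricSpace X] (S T : Finset X) (k : ℕ) (hk : 1 ≤ k)
    (hTS : T ⊆ S) (hT : T.Nonempty) (hS : S.Nonempty)
    (rS rT : ℝ) (hS' : IsOptRadius S k rS) (hT' : IsOptRadius T k rT) :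
    rT ≤ 2 * rS := by
  obtain ⟨⟨C, _, _, hCk, hC⟩, _⟩ := hS'
  exact opt_radius_subset_le_two_mul_general hT' hCk (hC.anti hTS)
end

section
/- Let T be a finite set of points in a metric space equipped with a linear order <, and let ρ ≥ 0. Suppose X ⊆ T satisfies: (i) all pairwise distances between distinct points of X exceed ρ; (ii) X center-covers T with radius ρ; and (iii) every element of X is <-smaller than every element of T \ X. Then X is the (unique) greedy set for (T,<,ρ). In particular, running the order-respecting greedy procedure on T recovers exactly the solution X. -/
/-- `M` is a greedy set for `(T, <, ρ)`: `M ⊆ T` and for every `t ∈ T`,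
`t ∈ M` iff every `s ∈ M` with `s < t` satisfies `dist s t > ρ`. -/
def IsGreedySet {X : Type*} [MetricSpace X] [LinearOrder X]
    (T M : Finset X) (ρ : ℝ) : Prop :=
  M ⊆ T ∧ ∀ t ∈ T, (t ∈ M ↔ ∀ s ∈ M, s < t → ρ < dist s t)

/-!
Only the relation `dist s t ≤ ρ` matters, so the argument is about independent sets of an
arbitrary relation. No element of `T \ Y` precedes an element of `Y`, so the greedy procedure never
rejects an element of the independent set `Y`: every greedy set contains `Y`. As `Y` dominates the
elements of `T \ Y`, all of which come later, `Y` is itself greedy. Finally, enlarging a set only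
makes the greedy criterion harder to meet, so a greedy set has no greedy proper superset.
-/

/-- `M` is a greedy independent subset of `T` for the conflict relation `r`: an element of `T` is
selected exactly when it conflicts with no earlier selected element. The greedy sets of radius `ρ`
in a metric space are those of the relation `dist s t ≤ ρ`; here `T` may be infinite, `r` need not
be symmetric, and `r s t` is only consulted for `s < t`. -/
def IsGreedyIndepSet {α : Type*} [Preorder α] (r : α → α → Prop) (T M : Set α) : Prop :=
  M ⊆ T ∧ ∀ t ∈ T, (t ∈ M ↔ ∀ s ∈ M, s < t → ¬ r s t)

section Preorder

variable {α : Type*} [Preorder α] {r : α → α → Prop} {T M N Y : Set α}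

theorem IsGreedyIndepSet.eq_of_subset (hM : IsGreedyIndepSet r T M)
    (hN : IsGreedyIndepSet r T N) (hMN : M ⊆ N) : M = N := by
  refine hMN.antisymm fun t htN => ?_
  have htT : t ∈ T := hN.1 htN
  exact (hM.2 t htT).2 fun s hsM => (hN.2 t htT).1 htN s (hMN hsM)

theorem IsGreedyIndepSet.prefix_subset (hM : IsGreedyIndepSet r T M) (hYT : Y ⊆ T)
    (hind : Y.Pairwise fun p q => ¬ r p q) (hprefix : ∀ y ∈ Y, ∀ t ∈ T \ Y, y < t) :
    Y ⊆ M := by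
  intro y hy
  refine (hM.2 y (hYT hy)).2 fun s hsM hsy => ?_
  have hsY : s ∈ Y := by
    by_contra hsY
    exact hsy.asymm (hprefix y hy s ⟨hM.1 hsM, hsY⟩)
  exact hind hsY hy hsy.ne

theorem isGreedyIndepSet_of_prefix (hYT : Y ⊆ T) (hind : Y.Pairwise fun p q => ¬ r p q)
    (hdom : ∀ t ∈ T \ Y, ∃ y ∈ Y, r y t) (hprefix : ∀ y ∈ Y, ∀ t ∈ T \ Y, y < t) :
    IsGreedyIndepSet r T Y := by
  refine ⟨hYT, fun t htT => ⟨fun htY s hsY hst => hind hsY htY hst.ne, fun hfree => ?_⟩⟩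
  by_contra htY
  obtain ⟨y, hy, hyt⟩ := hdom t ⟨htT, htY⟩
  exact hfree y hy (hprefix y hy t ⟨htT, htY⟩) hyt

theorem greedy_recovers_prefix_solution_general (hYT : Y ⊆ T)
    (hind : Y.Pairwise fun p q => ¬ r p q) (hdom : ∀ t ∈ T \ Y, ∃ y ∈ Y, r y t)
    (hprefix : ∀ y ∈ Y, ∀ t ∈ T \ Y, y < t) :
    IsGreedyIndepSet r T Y ∧ ∀ M : Set α, IsGreedyIndepSet r T M → M = Y := by
  have hY : IsGreedyIndepSet r T Y := isGreedyIndepSet_of_prefix hYT hind hdom hprefix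
  exact ⟨hY, fun M hM => (hY.eq_of_subset hM (hM.prefix_subset hYT hind hprefix)).symm⟩

end Preorder

section Metric

variable {X : Type*} [MetricSpace X] {ρ : ℝ}

theorem isGreedySet_iff_isGreedyIndepSet [LinearOrder X] {T M : Finset X} :
    IsGreedySet T M ρ ↔ IsGreedyIndepSet (fun s t => dist s t ≤ ρ) (T : Set X) (M : Set X) := by
  simp only [IsGreedySet, IsGreedyIndepSet, Finset.coe_subset, Finset.mem_coe, not_le]

theorem CenterCovers.exists_dist_le {C S : Finset X} (h : CenterCovers C S ρ) {p : X}
    (hp : p ∈ S) : ∃ c ∈ C, dist c p ≤ ρ := by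
  simpa only [dist_comm] using h p hp

end Metric

/-- If `Y ⊆ T` is independent at radius `ρ`, center-covers `T` with radius `ρ`,
and every element of `Y` precedes every element of `T \ Y` in the order, then
`Y` is the (unique) greedy set for `(T, <, ρ)`: the order-respecting greedy
procedure on `T` recovers exactly `Y`. -/
theorem greedy_recovers_prefix_solution
    {X : Type*} [MetricSpace X] [LinearOrder X]
    (T Y : Finset X) (ρ : ℝ) (hρ : 0 ≤ ρ)
    (hYT : Y ⊆ T)
    (hind : ∀ p ∈ Y, ∀ q ∈ Y, p ≠ q → ρ < dist p q)
    (hcov : CenterCovers Y T ρ)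
    (hprefix : ∀ y ∈ Y, ∀ t ∈ T, t ∉ Y → y < t) :
    IsGreedySet T Y ρ ∧ ∀ M : Finset X, IsGreedySet T M ρ → M = Y := by
  simp only [isGreedySet_iff_isGreedyIndepSet, ← Finset.coe_inj]
  have hgreedy := greedy_recovers_prefix_solution_general (r := fun s t => dist s t ≤ ρ)
    (Finset.coe_subset.2 hYT) (fun p hp q hq hpq => (hind p hp q hq hpq).not_ge)
    (fun t ht => hcov.exists_dist_le ht.1) (fun y hy t ht => hprefix y hy t ht.1 ht.2)
  exact ⟨hgreedy.1, fun M => hgreedy.2 M⟩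
end

section
/- Let T be a finite set of points in a metric space equipped with a linear order <, let ρ ≥ 0, and let M be the greedy set for (T,<,ρ). If C ⊆ T is an initial segment of T with respect to < (i.e., whenever c ∈ C and t ∈ T with t < c, then t ∈ C), then M ∩ C is the greedy set for (C,<,ρ). In particular, all machines that run the greedy procedure with the same ordered prefix C compute the same partial solution on C. -/
section Kernel

variable {X : Type*} {r : X → X → Prop} {T M C : Set X}

/-- `M` is a kernel of the relation `r` on `T`, in the sense of digraphs: a point of `T` belongs
to `M` exactly when no point of `M` blocks it, where `r s t` means that `s` blocks `t`. Greedy sets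
are the case in which `s` blocks the later points within distance `ρ` of it. -/
def IsKernelOn (r : X → X → Prop) (T M : Set X) : Prop :=
  M ⊆ T ∧ ∀ t ∈ T, (t ∈ M ↔ ∀ s ∈ M, ¬ r s t)

theorem forall_mem_inter_not_rel_iff {t : X} (hpred : ∀ s ∈ M, r s t → s ∈ C) :
    (∀ s ∈ M ∩ C, ¬ r s t) ↔ ∀ s ∈ M, ¬ r s t :=
  ⟨fun h s hs hst => h s ⟨hs, hpred s hs hst⟩ hst, fun h s hs => h s hs.1⟩

theorem greedySet_restrict_initialSegment_general (hM : IsKernelOn r T M) (hCT : C ⊆ T)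
    (hinit : ∀ c ∈ C, ∀ t ∈ T, r t c → t ∈ C) : IsKernelOn r C (M ∩ C) := by
  obtain ⟨hMT, hmem⟩ := hM
  refine ⟨Set.inter_subset_right, fun t ht => ?_⟩
  calc t ∈ M ∩ C ↔ t ∈ M := and_iff_left ht
    _ ↔ ∀ s ∈ M, ¬ r s t := hmem t (hCT ht)
    _ ↔ ∀ s ∈ M ∩ C, ¬ r s t :=
      (forall_mem_inter_not_rel_iff fun s hs => hinit t ht s (hMT hs)).symm

end Kernel

theorem isGreedySet_iff_isKernelOn {X : Type*} [MetricSpace X] [LinearOrder X]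
    {T M : Finset X} {ρ : ℝ} :
    IsGreedySet T M ρ ↔ IsKernelOn (fun s t => s < t ∧ dist s t ≤ ρ) (T : Set X) M := by
  simp only [IsGreedySet, IsKernelOn, Finset.coe_subset, Finset.mem_coe, not_and, not_le]

/-- If `M` is the greedy set for `(T, <, ρ)` and `C ⊆ T` is an initial segment
of `T` with respect to `<`, then `M ∩ C` is the greedy set for `(C, <, ρ)`:
all machines running the greedy procedure on the same ordered prefix `C`
compute the same partial solution. -/
theorem greedySet_restrict_initialSegment
    {X : Type*} [MetricSpace X] [LinearOrder X]
    (T M C : Finset X) (ρ : ℝ) (hρ : 0 ≤ ρ)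
    (hM : IsGreedySet T M ρ)
    (hCT : C ⊆ T)
    (hinit : ∀ c ∈ C, ∀ t ∈ T, t < c → t ∈ C) :
    IsGreedySet C (M ∩ C) ρ := by
  rw [isGreedySet_iff_isKernelOn, Finset.coe_inter]
  exact greedySet_restrict_initialSegment_general (isGreedySet_iff_isKernelOn.mp hM)
    (Finset.coe_subset.mpr hCT) fun c hc t ht htc => hinit c hc t ht htc.1
end

section
/- Let S be a finite nonempty set of points in a metric space, k ≥ 1, and let r* = r*(S,k) be the optimal k-center radius of S. Then there exists a value ρ belonging to the set of pairwise distances of points of S with ρ ≤ 2r*, and a subset C ⊆ S with |C| ≤ k, such that all pairwise distances between distinct points of C exceed ρ and C center-covers S with radius ρ. In particular, parametric pruning over the pairwise distances terminates at a radius ρ ≤ 2r* with at most k centers, yielding a 2-approximation for metric k-center. -/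
/-!
Let `ρ` be the largest pairwise distance of `S` that is at most `2r*`; it exists by compactness.
No pairwise distance of `S` lies in `(ρ, 2r*]`, so a maximal `ρ`-separated subset `C` of `S` is
even `2r*`-separated. Hence each ball of an optimal cover, having diameter at most `2r*`, contains
at most one point of `C`, and `C` has at most `k` points. By maximality `C` is a `ρ`-cover of `S`.
-/

section

open Metric Set
open scoped NNReal

variable {X : Type*} [PseudoMetricSpace X] {S C D : Set X} {r R ρ : ℝ≥0}

lemma isCover_iff_forall_exists_dist_le :
    IsCover r S D ↔ ∀ p ∈ S, ∃ c ∈ D, dist p c ≤ r := by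
  simp [isCover_iff_subset_iUnion_closedBall, subset_def]

lemma isSeparated_iff_pairwise_lt_dist :
    IsSeparated r C ↔ C.Pairwise (r < dist · ·) := by
  simp only [IsSeparated, edist_nndist, ENNReal.coe_lt_coe, ← coe_nndist, NNReal.coe_lt_coe]

lemma exists_isGreatest_image2_nndist_inter_Iic (hS : IsCompact S) (hne : S.Nonempty) (R : ℝ≥0) :
    ∃ ρ, IsGreatest (image2 nndist S S ∩ Iic R) ρ := by
  have hcompact : IsCompact (image2 nndist S S) := by
    rw [← image_uncurry_prod]
    exact (hS.prod hS).image continuous_nndist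
  obtain ⟨p, hp⟩ := hne
  exact (hcompact.inter_right isClosed_Iic).exists_isGreatest
    ⟨0, ⟨p, hp, p, hp, nndist_self p⟩, mem_Iic.2 zero_le⟩

lemma isSeparated_of_mem_upperBounds_image2_nndist
    (hρ : ρ ∈ upperBounds (image2 nndist S S ∩ Iic R)) (hCS : C ⊆ S) (hC : IsSeparated ρ C) :
    IsSeparated R C := by
  rw [isSeparated_iff_pairwise_lt_dist] at hC ⊢
  intro p hp q hq hpq
  by_contra! hle
  exact (hC hp hq hpq).not_ge (hρ ⟨mem_image2_of_mem (hCS hp) (hCS hq), hle⟩)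

lemma packingNumber_le_externalCoveringNumber_of_mem_upperBounds
    (hρ : ρ ∈ upperBounds (image2 nndist S S ∩ Iic (2 * r))) :
    packingNumber ρ S ≤ externalCoveringNumber r S :=
  calc
    packingNumber ρ S ≤ packingNumber (2 * r) S :=
      iSup₂_le fun _ hCS ↦ iSup_le fun hC ↦
        (isSeparated_of_mem_upperBounds_image2_nndist hρ hCS hC).encard_le_packingNumber hCS
    _ ≤ externalCoveringNumber r S := packingNumber_two_mul_le_externalCoveringNumber r S

lemma exists_isSeparated_isCover_of_mem_upperBounds
    (hρ : ρ ∈ upperBounds (image2 nndist S S ∩ Iic (2 * r))) (hDfin : D.Finite)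
    (hD : IsCover r S D) :
    ∃ C ⊆ S, C.encard ≤ D.encard ∧ IsSeparated ρ C ∧ IsCover ρ S C := by
  have hpack : packingNumber ρ S ≤ D.encard :=
    (packingNumber_le_externalCoveringNumber_of_mem_upperBounds hρ).trans
      hD.externalCoveringNumber_le_encard
  have hpack_ne_top : packingNumber ρ S ≠ ⊤ := (hpack.trans_lt hDfin.encard_lt_top).ne
  exact ⟨maximalSeparatedSet ρ S, maximalSeparatedSet_subset,
    (encard_maximalSeparatedSet hpack_ne_top).trans_le hpack,
    isSeparated_maximalSeparatedSet, isCover_maximalSeparatedSet hpack_ne_top⟩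

end

theorem parametric_pruning_two_approx_general
    {X : Type*} [PseudoMetricSpace X] {S : Set X} (hS : IsCompact S) (hne : S.Nonempty)
    {D : Finset X} {r : ℝ} (hD : ∀ p ∈ S, ∃ c ∈ D, dist p c ≤ r) :
    ∃ ρ : ℝ, (∃ p ∈ S, ∃ q ∈ S, ρ = dist p q) ∧ ρ ≤ 2 * r ∧
      ∃ C : Finset X, ↑C ⊆ S ∧ C.card ≤ D.card ∧
        (∀ p ∈ C, ∀ q ∈ C, p ≠ q → ρ < dist p q) ∧ ∀ p ∈ S, ∃ c ∈ C, dist p c ≤ ρ := by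
  have hr : 0 ≤ r := by
    obtain ⟨p, hp⟩ := hne
    obtain ⟨c, -, hpc⟩ := hD p hp
    exact dist_nonneg.trans hpc
  lift r to NNReal using hr
  obtain ⟨_, ⟨⟨p, hp, q, hq, rfl⟩, hle⟩, hub⟩ :=
    exists_isGreatest_image2_nndist_inter_Iic hS hne (2 * r)
  obtain ⟨C, hCS, hcard, hsep, hcover⟩ := exists_isSeparated_isCover_of_mem_upperBounds hub
    D.finite_toSet (isCover_iff_forall_exists_dist_le.2 hD)
  have hCfin : C.Finite := Set.encard_lt_top_iff.1 (hcard.trans_lt D.finite_toSet.encard_lt_top)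
  lift C to Finset X using hCfin
  exact ⟨dist p q, ⟨p, hp, q, hq, rfl⟩, mod_cast hle, C, hCS, by simpa using hcard,
    isSeparated_iff_pairwise_lt_dist.1 hsep, isCover_iff_forall_exists_dist_le.1 hcover⟩

/-- Parametric pruning terminates at a radius `ρ` that is a pairwise distance
of points of `S`, with `ρ ≤ 2r*`, producing at most `k` centers that are
pairwise more than `ρ` apart and center-cover `S` with radius `ρ` — a
2-approximation for metric k-center. -/
theorem parametric_pruning_two_approx
    {X : Type*} [MetricSpace X] (S : Finset X) (hS : S.Nonempty)
    (k : ℕ) (hk : 1 ≤ k) (rstar : ℝ) (hopt : IsOptRadius S k rstar) :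
    ∃ ρ : ℝ, (∃ p ∈ S, ∃ q ∈ S, ρ = dist p q) ∧ ρ ≤ 2 * rstar ∧
      ∃ C ⊆ S, C.card ≤ k ∧ (∀ p ∈ C, ∀ q ∈ C, p ≠ q → ρ < dist p q) ∧
        CenterCovers C S ρ := by
  obtain ⟨⟨D, -, -, hDk, hD⟩, -⟩ := hopt
  obtain ⟨ρ, hρ, hle, C, hCS, hcard, hC⟩ :=
    parametric_pruning_two_approx_general S.finite_toSet.isCompact hS hD
  exact ⟨ρ, hρ, hle, C, mod_cast hCS, hcard.trans hDk, hC⟩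
end
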